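/- There exist absolute constants C > 0 and c > 0 such that the following holds. Let n ≥ 2, let r ≥ 1 and K ≥ 1 be integers, and let G be a connected n-vertex graph in which every ball of radius r contains at most K·r² vertices. Then G admits a +k additive emulator H with at most C·K·n·(log n)^c edges, where k = ⌈C·r·(log n)^c⌉. -/

import Mathlib

open SimpleGraph

/-- The weighted distance in an emulator `H` with edge weights `w`:
the minimum total weight of a walk from `s` to `t` (`⊤` if none exists). -/
noncomputable def emulatorDist {V : Type*} (H : SimpleGraph V) (w : Sym2 V → ℕ)
    (s t : V) : ℕ∞ :=
  ⨅ p : H.Walk s t, ((p.edges.map w).sum : ℕ∞)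

/-- `H` (with positive integer edge weights `w`) is a `+k` additive emulator of `G`:
for all vertices `s, t`, `dist_G(s,t) ≤ dist_H(s,t) ≤ dist_G(s,t) + k`. -/
def IsAdditiveEmulator {V : Type*} (G H : SimpleGraph V) (w : Sym2 V → ℕ)
    (k : ℕ) : Prop :=
  (∀ e ∈ H.edgeSet, 0 < w e) ∧
  ∀ s t : V, (G.dist s t : ℕ∞) ≤ emulatorDist H w s t ∧
    emulatorDist H w s t ≤ (G.dist s t : ℕ∞) + (k : ℕ∞)

/-- The ball of radius `ρ` around `v` in `G`. -/
def gball {V : Type*} (G : SimpleGraph V) (v : V) (ρ : ℕ) : Set V :=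
  {u | G.dist v u ≤ ρ}

/-!
Suppose every vertex `s` has a far vertex `t`, meaning `dist s t > r`; otherwise a single star is an
emulator. Sample a vertex set `S` by keeping each vertex independently with probability
`p ≈ 3 log n / r`. The `r` vertices following `s` on a shortest path to a far `t` all miss `S` with
probability at most `n⁻³`, so with probability at least `1/2` every far pair is hit. Then each
vertex is within `r` of `S`, and distances inside `S` are realised exactly by chains of hops of
length at most `r`. Joining each vertex to a nearby sampled one, and all sampled pairs at distance
at most `r` to each other, thus distorts distances by at most `4r`. A pair survives the sampling
with probability `p²`, so of the at most `n · K r²` pairs at distance at most `r`, about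
`p² · n · K r² ≈ K n log² n` remain.
-/

open Finset

lemma exists_le_of_weighted_sum_le {α : Type*} {A : Finset α} {w X : α → ℝ} {c : ℝ}
    (hw : ∀ i ∈ A, 0 ≤ w i) (hw_pos : 0 < ∑ i ∈ A, w i)
    (hsum : ∑ i ∈ A, w i * X i ≤ (∑ i ∈ A, w i) * c) :
    ∃ i ∈ A, X i ≤ c := by
  by_contra! hlt
  obtain ⟨i, hi, hwi⟩ := exists_lt_of_sum_lt (by simpa using hw_pos : ∑ _i ∈ A, (0 : ℝ) < _)
  refine hsum.not_gt ?_
  rw [sum_mul]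
  exact sum_lt_sum (fun j hj => mul_le_mul_of_nonneg_left (hlt j hj).le (hw j hj))
    ⟨i, hi, mul_lt_mul_of_pos_left (hlt i hi) hwi⟩

lemma one_sub_min_one_div_pow_le_exp_neg {r : ℕ} (hr : 0 < r) (x : ℝ) :
    (1 - min 1 (x / r)) ^ r ≤ Real.exp (-x) := by
  have hr' : (0 : ℝ) < r := Nat.cast_pos.2 hr
  rcases le_total 1 (x / r) with h | h
  · rw [min_eq_left h, sub_self, zero_pow hr.ne']
    positivity
  · rw [min_eq_right h]
    exact Real.one_sub_div_pow_le_exp_neg ((div_le_one hr').1 h)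

section Sampling

variable {V : Type*} [Fintype V] [DecidableEq V]

/-- The probability that a random subset of `V`, containing each element independently with
probability `p`, equals `S`. -/
def bernoulliWeight (p : ℝ) (S : Finset V) : ℝ :=
  p ^ #S * (1 - p) ^ #Sᶜ

lemma bernoulliWeight_nonneg {p : ℝ} (hp₀ : 0 ≤ p) (hp₁ : p ≤ 1) (S : Finset V) :
    0 ≤ bernoulliWeight p S :=
  mul_nonneg (pow_nonneg hp₀ _) (pow_nonneg (sub_nonneg.2 hp₁) _)

lemma bernoulliWeight_compl (p : ℝ) (S : Finset V) :
    bernoulliWeight p Sᶜ = bernoulliWeight (1 - p) S := by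
  rw [bernoulliWeight, bernoulliWeight, compl_compl, sub_sub_cancel, mul_comm]

lemma sum_bernoulliWeight_disjoint (p : ℝ) (F : Finset V) :
    ∑ S with Disjoint F S, bernoulliWeight p S = (1 - p) ^ #F := by
  have filter_eq : ({S | Disjoint F S} : Finset (Finset V)) = Fᶜ.powerset := by
    ext S
    simp [disjoint_comm (a := F), subset_compl_iff_disjoint_right]
  have weight_eq : ∀ S ∈ Fᶜ.powerset,
      bernoulliWeight p S = (1 - p) ^ #F * (p ^ #S * (1 - p) ^ (#Fᶜ - #S)) := by
    intro S hS
    have card_S : #S ≤ #Fᶜ := card_le_card (mem_powerset.1 hS)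
    have card_F := card_add_card_compl F
    have card_compl_S : #Sᶜ = #F + (#Fᶜ - #S) := by rw [card_compl]; omega
    rw [bernoulliWeight, card_compl_S, pow_add]
    ring
  rw [filter_eq, sum_congr rfl weight_eq, ← mul_sum, sum_pow_mul_eq_add_pow]
  simp

lemma sum_bernoulliWeight (p : ℝ) : ∑ S : Finset V, bernoulliWeight p S = 1 := by
  simpa using sum_bernoulliWeight_disjoint p (∅ : Finset V)

lemma sum_bernoulliWeight_subset (p : ℝ) (F : Finset V) :
    ∑ S with F ⊆ S, bernoulliWeight p S = p ^ #F := by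
  calc ∑ S with F ⊆ S, bernoulliWeight p S
      = ∑ S with Disjoint F S, bernoulliWeight (1 - p) S := by
        simp only [sum_filter]
        refine Fintype.sum_bijective compl compl_bijective _ _ fun S => ?_
        simp [← bernoulliWeight_compl, ← subset_compl_iff_disjoint_right]
    _ = p ^ #F := by rw [sum_bernoulliWeight_disjoint, sub_sub_cancel]

lemma sum_bernoulliWeight_exists_disjoint_le {ι : Type*} {p : ℝ} (hp₀ : 0 ≤ p) (hp₁ : p ≤ 1)
    (Q : Finset ι) (F : ι → Finset V) :
    ∑ S with ∃ q ∈ Q, Disjoint (F q) S, bernoulliWeight p S ≤ ∑ q ∈ Q, (1 - p) ^ #(F q) := by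
  have union_bound (S : Finset V) : (if ∃ q ∈ Q, Disjoint (F q) S then bernoulliWeight p S else 0) ≤
      ∑ q ∈ Q, if Disjoint (F q) S then bernoulliWeight p S else 0 := by
    have term_nonneg : ∀ q ∈ Q, 0 ≤ if Disjoint (F q) S then bernoulliWeight p S else 0 :=
      fun q _ => ite_nonneg (bernoulliWeight_nonneg hp₀ hp₁ S) le_rfl
    split_ifs with hmiss
    · obtain ⟨q, hq, hdisj⟩ := hmiss
      simpa only [if_pos hdisj] using single_le_sum term_nonneg hq
    · exact sum_nonneg term_nonneg
  calc ∑ S with ∃ q ∈ Q, Disjoint (F q) S, bernoulliWeight p S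
      ≤ ∑ S, ∑ q ∈ Q, if Disjoint (F q) S then bernoulliWeight p S else 0 := by
        rw [sum_filter]
        exact sum_le_sum fun S _ => union_bound S
    _ = ∑ q ∈ Q, ∑ S with Disjoint (F q) S, bernoulliWeight p S := by
        rw [sum_comm]; simp only [sum_filter]
    _ = ∑ q ∈ Q, (1 - p) ^ #(F q) := by simp only [sum_bernoulliWeight_disjoint]

lemma one_sub_le_sum_bernoulliWeight_forall_not_disjoint {ι : Type*} {p : ℝ} (hp₀ : 0 ≤ p)
    (hp₁ : p ≤ 1) (Q : Finset ι) (F : ι → Finset V) :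
    1 - ∑ q ∈ Q, (1 - p) ^ #(F q) ≤
      ∑ S with ∀ q ∈ Q, ¬ Disjoint (F q) S, bernoulliWeight p S := by
  have total := sum_filter_add_sum_filter_not univ
    (fun S => ∃ q ∈ Q, Disjoint (F q) S) (bernoulliWeight (V := V) p)
  simp only [not_exists, not_and, sum_bernoulliWeight] at total
  linarith [sum_bernoulliWeight_exists_disjoint_le hp₀ hp₁ Q F]

lemma sum_bernoulliWeight_mul_card_subset {κ : Type*} (p : ℝ) (E : Finset κ)
    (g : κ → Finset V) :
    ∑ S, bernoulliWeight p S * (#{e ∈ E | g e ⊆ S} : ℝ) = ∑ e ∈ E, p ^ #(g e) := by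
  calc ∑ S, bernoulliWeight p S * (#{e ∈ E | g e ⊆ S} : ℝ)
      = ∑ S, ∑ e ∈ E, if g e ⊆ S then bernoulliWeight p S else 0 := by
        simp only [card_filter, Nat.cast_sum, Nat.cast_ite, Nat.cast_one, Nat.cast_zero, mul_sum,
          mul_ite, mul_one, mul_zero]
    _ = ∑ e ∈ E, ∑ S with g e ⊆ S, bernoulliWeight p S := by
        rw [sum_comm]; simp only [sum_filter]
    _ = ∑ e ∈ E, p ^ #(g e) := by simp only [sum_bernoulliWeight_subset]

end Sampling

lemma exists_hitting_finset {V ι κ : Type*} [Finite V] [DecidableEq V] {p : ℝ} (hp₀ : 0 ≤ p)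
    (hp₁ : p ≤ 1) (Q : Finset ι) (F : ι → Finset V)
    (hQ : ∑ q ∈ Q, (1 - p) ^ #(F q) ≤ 1 / 2) (E : Finset κ) (g : κ → Finset V) :
    ∃ S : Finset V, (∀ q ∈ Q, ¬ Disjoint (F q) S) ∧
      (#{e ∈ E | g e ⊆ S} : ℝ) ≤ 2 * ∑ e ∈ E, p ^ #(g e) := by
  have := Fintype.ofFinite V
  let hitting : Finset (Finset V) := {S | ∀ q ∈ Q, ¬ Disjoint (F q) S}
  have weight_nonneg : ∀ S : Finset V, 0 ≤ bernoulliWeight p S := bernoulliWeight_nonneg hp₀ hp₁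
  have hitting_weight : 1 / 2 ≤ ∑ S ∈ hitting, bernoulliWeight p S := by
    linarith [one_sub_le_sum_bernoulliWeight_forall_not_disjoint hp₀ hp₁ Q F]
  have expectation_le : ∑ S ∈ hitting, bernoulliWeight p S * (#{e ∈ E | g e ⊆ S} : ℝ) ≤
      (∑ S ∈ hitting, bernoulliWeight p S) * (2 * ∑ e ∈ E, p ^ #(g e)) := by
    have : 0 ≤ ∑ e ∈ E, p ^ #(g e) := sum_nonneg fun e _ => by positivity
    calc ∑ S ∈ hitting, bernoulliWeight p S * (#{e ∈ E | g e ⊆ S} : ℝ)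
        ≤ ∑ S, bernoulliWeight p S * (#{e ∈ E | g e ⊆ S} : ℝ) :=
          sum_le_sum_of_subset_of_nonneg (subset_univ _)
            fun S _ _ => mul_nonneg (weight_nonneg S) (Nat.cast_nonneg _)
      _ = 1 / 2 * (2 * ∑ e ∈ E, p ^ #(g e)) := by
          rw [sum_bernoulliWeight_mul_card_subset]; ring
      _ ≤ _ := by gcongr
  obtain ⟨S, hS, hcard⟩ := exists_le_of_weighted_sum_le (fun S _ => weight_nonneg S)
    (by linarith) expectation_le
  exact ⟨S, (mem_filter.1 hS).2, hcard⟩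

section EmulatorDist

variable {V : Type*} {G H : SimpleGraph V} {w : Sym2 V → ℕ}

lemma emulatorDist_le_walk {s t : V} (p : H.Walk s t) :
    emulatorDist H w s t ≤ ((p.edges.map w).sum : ℕ∞) :=
  iInf_le _ p

@[simp]
lemma emulatorDist_self (s : V) : emulatorDist H w s s = 0 := by
  simpa using emulatorDist_le_walk (w := w) (Walk.nil : H.Walk s s)

lemma emulatorDist_le_of_adj {s t : V} (h : H.Adj s t) : emulatorDist H w s t ≤ w s(s, t) := by
  simpa using emulatorDist_le_walk (w := w) h.toWalk

lemma emulatorDist_triangle (s t u : V) :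
    emulatorDist H w s u ≤ emulatorDist H w s t + emulatorDist H w t u := by
  refine ENat.le_iInf_add_iInf fun p q => ?_
  simpa using emulatorDist_le_walk (w := w) (p.append q)

lemma emulatorDist_comm (s t : V) : emulatorDist H w s t = emulatorDist H w t s := by
  have le_swap (a b : V) : emulatorDist H w a b ≤ emulatorDist H w b a := by
    refine le_iInf fun p => ?_
    simpa [List.sum_reverse] using emulatorDist_le_walk (w := w) p.reverse
  exact (le_swap s t).antisymm (le_swap t s)

lemma dist_le_emulatorDist (hG : G.Connected)
    (hw : ∀ a b, H.Adj a b → G.dist a b ≤ w s(a, b)) (s t : V) :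
    (G.dist s t : ℕ∞) ≤ emulatorDist H w s t := by
  refine le_iInf fun p => Nat.cast_le.2 ?_
  induction p with
  | nil => simp
  | @cons a b c hab p ih =>
    calc G.dist a c ≤ G.dist a b + G.dist b c := hG.dist_triangle
      _ ≤ w s(a, b) + (p.edges.map w).sum := add_le_add (hw a b hab) ih
      _ = _ := by simp

lemma IsAdditiveEmulator.mono {k l : ℕ} (h : IsAdditiveEmulator G H w k) (hkl : k ≤ l) :
    IsAdditiveEmulator G H w l :=
  ⟨h.1, fun s t => ⟨(h.2 s t).1, (h.2 s t).2.trans (by gcongr)⟩⟩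

/-- The weight that `G`-distance induces on unordered pairs: an emulator weighted this way never
underestimates distances. -/
noncomputable def distWeight (G : SimpleGraph V) : Sym2 V → ℕ :=
  Sym2.lift ⟨G.dist, fun _ _ => dist_comm⟩

@[simp]
lemma distWeight_mk (a b : V) : distWeight G s(a, b) = G.dist a b := rfl

lemma emulatorDist_distWeight_le_dist {s t : V} (h : s ≠ t → H.Adj s t) :
    emulatorDist H (distWeight G) s t ≤ G.dist s t := by
  obtain rfl | hst := eq_or_ne s t
  · simp
  · exact emulatorDist_le_of_adj (h hst)

lemma isAdditiveEmulator_distWeight (hG : G.Connected) {k : ℕ}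
    (h : ∀ s t, emulatorDist H (distWeight G) s t ≤ G.dist s t + k) :
    IsAdditiveEmulator G H (distWeight G) k := by
  refine ⟨Sym2.ind fun a b hab => hG.pos_dist_of_ne (Adj.ne hab), fun s t => ⟨?_, h s t⟩⟩
  exact dist_le_emulatorDist hG (fun a b _ => (distWeight_mk a b).ge) s t

end EmulatorDist

section Hubs

variable {V : Type*} {G : SimpleGraph V} {r : ℕ} {S : Set V}

/-- The vertices within distance `r` of `s`, other than `s` itself, that lie on a shortest path
from `s` to `t`. -/
def geodesicHead (G : SimpleGraph V) (r : ℕ) (s t : V) : Set V :=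
  {x | 0 < G.dist s x ∧ G.dist s x ≤ r ∧ G.dist s x + G.dist x t = G.dist s t}

lemma exists_dist_eq_and_dist_add_dist_eq (hG : G.Connected) {s t : V} {i : ℕ}
    (hi : i ≤ G.dist s t) : ∃ x, G.dist s x = i ∧ G.dist s x + G.dist x t = G.dist s t := by
  obtain ⟨p, hp⟩ := hG.exists_walk_length_eq_dist s t
  have dist_take := dist_le (p.take i)
  have dist_drop := dist_le (p.drop i)
  have triangle := hG.dist_triangle (u := s) (v := p.getVert i) (w := t)
  rw [Walk.take_length] at dist_take
  rw [Walk.drop_length] at dist_drop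
  exact ⟨p.getVert i, by omega, by omega⟩

lemma le_ncard_geodesicHead [Finite V] (hG : G.Connected) {s t : V} (h : r ≤ G.dist s t) :
    r ≤ (geodesicHead G r s t).ncard := by
  have dist_surjOn : Set.Icc 1 r ⊆ G.dist s '' geodesicHead G r s t := by
    intro i hi
    obtain ⟨x, rfl, hx⟩ := exists_dist_eq_and_dist_add_dist_eq hG (hi.2.trans h)
    exact ⟨x, ⟨hi.1, hi.2, hx⟩, rfl⟩
  calc r = (Set.Icc 1 r).ncard := by simp [Set.ncard_eq_toFinset_card']
    _ ≤ (G.dist s '' geodesicHead G r s t).ncard := Set.ncard_le_ncard dist_surjOn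
    _ ≤ (geodesicHead G r s t).ncard := Set.ncard_image_le

/-- `S` is a set of hubs at scale `r`: every vertex has a hub within distance `r`, and any two hubs
further apart than `r` have another hub among the first `r` steps of a shortest path. -/
structure IsHubSet (G : SimpleGraph V) (r : ℕ) (S : Set V) : Prop where
  exists_near (v : V) : ∃ x ∈ S, G.dist v x ≤ r
  exists_between {s t : V} (hs : s ∈ S) (ht : t ∈ S) (hst : r < G.dist s t) :
    (geodesicHead G r s t ∩ S).Nonempty

lemma isHubSet_singleton {v : V} (hv : ∀ t, G.dist t v ≤ r) : IsHubSet G r {v} where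
  exists_near t := ⟨v, rfl, hv t⟩
  exists_between := by rintro _ _ rfl rfl h; simp at h

lemma isHubSet_of_forall_nonempty (hfar : ∀ v, ∃ t, r < G.dist v t)
    (hhit : ∀ s t, r < G.dist s t → (geodesicHead G r s t ∩ S).Nonempty) : IsHubSet G r S where
  exists_near v := by
    obtain ⟨t, ht⟩ := hfar v
    obtain ⟨x, hx, hxS⟩ := hhit v t ht
    exact ⟨x, hxS, hx.2.1⟩
  exists_between _ _ := hhit _ _

/-- The graph joining distinct vertices at `G`-distance at most `r`. -/
def nearGraph (G : SimpleGraph V) (r : ℕ) : SimpleGraph V where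
  Adj a b := a ≠ b ∧ G.dist a b ≤ r
  symm := ⟨fun _ _ h => ⟨h.1.symm, dist_comm.trans_le h.2⟩⟩
  loopless := ⟨fun _ h => h.1 rfl⟩

lemma two_mul_ncard_edgeSet_nearGraph_le [Fintype V] {B : ℕ}
    (hball : ∀ v, (gball G v r).ncard ≤ B) :
    2 * (nearGraph G r).edgeSet.ncard ≤ Fintype.card V * B := by
  classical
  have degree_le (v : V) : (nearGraph G r).degree v ≤ B := by
    rw [← card_neighborFinset_eq_degree, ← Set.ncard_coe_finset, coe_neighborFinset]
    exact (Set.ncard_le_ncard fun u hu => hu.2).trans (hball v)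
  calc 2 * (nearGraph G r).edgeSet.ncard = ∑ v, (nearGraph G r).degree v := by
        rw [sum_degrees_eq_twice_card_edges, ← coe_edgeFinset, Set.ncard_coe_finset]
    _ ≤ Fintype.card V * B := by simpa using sum_le_card_nsmul univ _ B fun v _ => degree_le v

/-- The emulator built on the hubs `S`: every vertex is joined to its hub `π v`, and hubs at
distance at most `r` are joined to each other. -/
def hubGraph (G : SimpleGraph V) (r : ℕ) (S : Set V) (π : V → V) : SimpleGraph V :=
  fromEdgeSet (Set.range (fun v => s(v, π v)) ∪ (nearGraph G r).edgeSet ∩ S.sym2)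

lemma hubGraph_adj_hub {π : V → V} {v : V} (h : v ≠ π v) : (hubGraph G r S π).Adj v (π v) :=
  (fromEdgeSet_adj _).2 ⟨.inl ⟨v, rfl⟩, h⟩

lemma hubGraph_adj_of_mem {π : V → V} {s t : V} (hs : s ∈ S) (ht : t ∈ S) (hst : s ≠ t)
    (h : G.dist s t ≤ r) : (hubGraph G r S π).Adj s t :=
  (fromEdgeSet_adj _).2 ⟨.inr ⟨⟨hst, h⟩, hs, ht⟩, hst⟩

lemma ncard_edgeSet_hubGraph_le [Fintype V] (π : V → V) :
    (hubGraph G r S π).edgeSet.ncard ≤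
      Fintype.card V + ((nearGraph G r).edgeSet ∩ S.sym2).ncard := by
  rw [hubGraph, edgeSet_fromEdgeSet]
  refine (Set.ncard_le_ncard Set.sdiff_subset).trans ((Set.ncard_union_le _ _).trans ?_)
  gcongr
  rw [← Set.image_univ, ← Nat.card_eq_fintype_card, ← Set.ncard_univ]
  exact Set.ncard_image_le

lemma IsHubSet.emulatorDist_hubGraph_le (hS : IsHubSet G r S) (π : V → V) {s t : V}
    (hs : s ∈ S) (ht : t ∈ S) :
    emulatorDist (hubGraph G r S π) (distWeight G) s t ≤ G.dist s t := by
  induction hd : G.dist s t using Nat.strong_induction_on generalizing s with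
  | _ d ih =>
    subst hd
    obtain hnear | hfar := le_or_gt (G.dist s t) r
    · exact emulatorDist_distWeight_le_dist fun hst => hubGraph_adj_of_mem hs ht hst hnear
    · obtain ⟨x, ⟨hsx_pos, hsx_le, hsxt⟩, hx⟩ := hS.exists_between hs ht hfar
      have hop : emulatorDist (hubGraph G r S π) (distWeight G) s x ≤ G.dist s x :=
        emulatorDist_distWeight_le_dist fun hsx => hubGraph_adj_of_mem hs hx hsx hsx_le
      have rest := ih (G.dist x t) (by omega) hx rfl
      calc emulatorDist (hubGraph G r S π) (distWeight G) s t
          ≤ _ + emulatorDist (hubGraph G r S π) (distWeight G) x t := emulatorDist_triangle s x t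
        _ ≤ G.dist s x + G.dist x t := add_le_add hop rest
        _ = G.dist s t := mod_cast hsxt

lemma IsHubSet.isAdditiveEmulator_hubGraph (hS : IsHubSet G r S) (hG : G.Connected) {π : V → V}
    (hπS : ∀ v, π v ∈ S) (hπ : ∀ v, G.dist v (π v) ≤ r) :
    IsAdditiveEmulator G (hubGraph G r S π) (distWeight G) (4 * r) := by
  refine isAdditiveEmulator_distWeight hG fun s t => ?_
  let δ := emulatorDist (hubGraph G r S π) (distWeight G)
  have to_hub (v : V) : δ v (π v) ≤ r :=
    (emulatorDist_distWeight_le_dist hubGraph_adj_hub).trans (mod_cast hπ v)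
  have hub_dist : G.dist (π s) (π t) ≤ r + G.dist s t + r :=
    calc G.dist (π s) (π t) ≤ G.dist (π s) t + G.dist t (π t) := hG.dist_triangle
      _ ≤ G.dist (π s) s + G.dist s t + G.dist t (π t) := by gcongr; exact hG.dist_triangle
      _ ≤ r + G.dist s t + r := by gcongr; exacts [dist_comm.trans_le (hπ s), hπ t]
  calc δ s t ≤ δ s (π t) + δ (π t) t := emulatorDist_triangle _ _ _
    _ ≤ δ s (π s) + δ (π s) (π t) + δ t (π t) :=
        add_le_add (emulatorDist_triangle _ _ _) (emulatorDist_comm _ _).le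
    _ ≤ r + (r + G.dist s t + r : ℕ) + r := by
        gcongr
        · exact to_hub s
        · exact (hS.emulatorDist_hubGraph_le π (hπS s) (hπS t)).trans (mod_cast hub_dist)
        · exact to_hub t
    _ = G.dist s t + (4 * r : ℕ) := by norm_cast; omega

end Hubs

section Existence

variable {V : Type*} [Fintype V] {G : SimpleGraph V} {r : ℕ}

lemma exists_set_inter_geodesicHead_nonempty (hG : G.Connected) {p : ℝ} (hp₀ : 0 ≤ p)
    (hp₁ : p ≤ 1) (hp : (Fintype.card V : ℝ) ^ 2 * (1 - p) ^ r ≤ 1 / 2) :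
    ∃ S : Set V, (∀ s t, r < G.dist s t → (geodesicHead G r s t ∩ S).Nonempty) ∧
      (((nearGraph G r).edgeSet ∩ S.sym2).ncard : ℝ) ≤
        2 * p ^ 2 * (nearGraph G r).edgeSet.ncard := by
  classical
  let far : Finset (V × V) := {q | r < G.dist q.1 q.2}
  let head (q : V × V) : Finset V := (geodesicHead G r q.1 q.2).toFinset
  have card_head : ∀ q ∈ far, r ≤ #(head q) := fun q hq => by
    rw [← Set.ncard_eq_toFinset_card']
    exact le_ncard_geodesicHead hG (mem_filter.1 hq).2.le
  have miss_le : ∑ q ∈ far, (1 - p) ^ #(head q) ≤ 1 / 2 :=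
    calc ∑ q ∈ far, (1 - p) ^ #(head q)
        ≤ ∑ q : V × V, (1 - p) ^ r := by
          refine (sum_le_sum fun q hq => ?_).trans
            (sum_le_sum_of_subset_of_nonneg (subset_univ far) fun _ _ _ => ?_)
          · exact pow_le_pow_of_le_one (by linarith) (by linarith) (card_head q hq)
          · exact pow_nonneg (by linarith) r
      _ = (Fintype.card V : ℝ) ^ 2 * (1 - p) ^ r := by simp [sq]
      _ ≤ 1 / 2 := hp
  obtain ⟨S, hhit, hcard⟩ := exists_hitting_finset hp₀ hp₁ far head miss_le
    (nearGraph G r).edgeFinset Sym2.toFinset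
  refine ⟨S, fun s t hst => ?_, ?_⟩
  · obtain ⟨x, hx, hxS⟩ := not_disjoint_iff.1 (hhit (s, t) (by simpa [far] using hst))
    exact ⟨x, by simpa [head] using hx, hxS⟩
  · have edges_eq : (nearGraph G r).edgeSet ∩ (S : Set V).sym2 =
        ({e ∈ (nearGraph G r).edgeFinset | e.toFinset ⊆ S} : Finset (Sym2 V)) := by
      ext e
      simp [Set.mem_sym2_iff_subset, subset_iff, Set.subset_def]
    have sum_pow : ∑ e ∈ (nearGraph G r).edgeFinset, p ^ #e.toFinset =
        (nearGraph G r).edgeSet.ncard * p ^ 2 := by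
      have card_eq_two : ∀ e ∈ (nearGraph G r).edgeFinset, p ^ #e.toFinset = p ^ 2 := fun e he => by
        rw [e.card_toFinset_of_not_isDiag (not_isDiag_of_mem_edgeFinset he)]
      rw [sum_congr rfl card_eq_two, sum_const, nsmul_eq_mul, ← Set.ncard_coe_finset,
        coe_edgeFinset]
    rw [edges_eq, Set.ncard_coe_finset]
    linarith

lemma sq_mul_one_sub_min_pow_le_half {n : ℕ} (hn : 2 ≤ n) (hr : 0 < r) :
    (n : ℝ) ^ 2 * (1 - min 1 (3 * Real.log n / r)) ^ r ≤ 1 / 2 := by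
  have hn' : (2 : ℝ) ≤ n := mod_cast hn
  have exp_eq : Real.exp (-(3 * Real.log n)) = ((n : ℝ) ^ 3)⁻¹ := by
    rw [Real.exp_neg, ← Nat.cast_ofNat, Real.exp_nat_mul, Real.exp_log (by linarith)]
  calc (n : ℝ) ^ 2 * (1 - min 1 (3 * Real.log n / r)) ^ r
      ≤ (n : ℝ) ^ 2 * ((n : ℝ) ^ 3)⁻¹ := by
        gcongr
        exact exp_eq ▸ one_sub_min_one_div_pow_le_exp_neg hr _
    _ = (n : ℝ)⁻¹ := by field_simp
    _ ≤ 1 / 2 := by rw [one_div]; gcongr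

lemma exists_isHubSet (hG : G.Connected) (hr : 0 < r) :
    ∃ S : Set V, IsHubSet G r S ∧
      (((nearGraph G r).edgeSet ∩ S.sym2).ncard : ℝ) ≤
        18 * (Real.log (Fintype.card V) / r) ^ 2 * (nearGraph G r).edgeSet.ncard := by
  by_cases hcenter : ∃ v, ∀ t, G.dist v t ≤ r
  · obtain ⟨v, hv⟩ := hcenter
    have no_edges : (nearGraph G r).edgeSet ∩ ({v} : Set V).sym2 = ∅ := by simp
    refine ⟨{v}, isHubSet_singleton fun t => dist_comm.trans_le (hv t), ?_⟩
    rw [no_edges, Set.ncard_empty, Nat.cast_zero]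
    positivity
  · push Not at hcenter
    obtain ⟨v⟩ := hG.nonempty
    obtain ⟨t, hvt⟩ := hcenter v
    have hcard : 2 ≤ Fintype.card V :=
      Fintype.one_lt_card_iff.2 ⟨v, t, by rintro rfl; simp at hvt⟩
    have hp₀ : 0 ≤ min 1 (3 * Real.log (Fintype.card V) / r) := by positivity
    obtain ⟨S, hhit, hS⟩ := exists_set_inter_geodesicHead_nonempty hG hp₀ (min_le_left _ _)
      (sq_mul_one_sub_min_pow_le_half hcard hr)
    refine ⟨S, isHubSet_of_forall_nonempty hcenter hhit, hS.trans ?_⟩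
    calc 2 * min 1 (3 * Real.log (Fintype.card V) / r) ^ 2 * (nearGraph G r).edgeSet.ncard
        ≤ 2 * (3 * Real.log (Fintype.card V) / r) ^ 2 * (nearGraph G r).edgeSet.ncard := by
          gcongr
          exact min_le_right _ _
      _ = _ := by ring

end Existence

theorem quadratic_expansion_emulator_general {V : Type*} [Fintype V] {G : SimpleGraph V}
    (hG : G.Connected) {r B : ℕ} (hr : 0 < r) (hball : ∀ v, (gball G v r).ncard ≤ B) :
    ∃ (H : SimpleGraph V) (w : Sym2 V → ℕ), IsAdditiveEmulator G H w (4 * r) ∧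
      (H.edgeSet.ncard : ℝ) ≤
        Fintype.card V * (1 + 9 * B * (Real.log (Fintype.card V) / r) ^ 2) := by
  obtain ⟨S, hS, hcard⟩ := exists_isHubSet hG hr
  choose π hπS hπ using hS.exists_near
  refine ⟨hubGraph G r S π, distWeight G, hS.isAdditiveEmulator_hubGraph hG hπS hπ, ?_⟩
  have near_le : 2 * ((nearGraph G r).edgeSet.ncard : ℝ) ≤ Fintype.card V * B :=
    mod_cast two_mul_ncard_edgeSet_nearGraph_le hball
  set L := Real.log (Fintype.card V) / r
  calc ((hubGraph G r S π).edgeSet.ncard : ℝ)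
      ≤ Fintype.card V + ((nearGraph G r).edgeSet ∩ S.sym2).ncard :=
        mod_cast ncard_edgeSet_hubGraph_le π
    _ ≤ Fintype.card V + 9 * L ^ 2 * (2 * (nearGraph G r).edgeSet.ncard) := by linarith
    _ ≤ Fintype.card V + 9 * L ^ 2 * (Fintype.card V * B) := by gcongr
    _ = Fintype.card V * (1 + 9 * B * L ^ 2) := by ring

lemma one_le_four_mul_log_sq {n : ℕ} (hn : 2 ≤ n) : 1 ≤ 4 * Real.log n ^ 2 := by
  have half_le_log : 1 / 2 ≤ Real.log n :=
    calc (1 / 2 : ℝ) ≤ Real.log 2 := by linarith [Real.log_two_gt_d9]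
      _ ≤ Real.log n := Real.log_le_log two_pos (mod_cast hn)
  nlinarith

lemma four_mul_le_ceil_mul_log_sq {n : ℕ} (hn : 2 ≤ n) (r : ℕ) :
    4 * r ≤ ⌈16 * (r : ℝ) * Real.log n ^ 2⌉₊ := by
  refine Nat.cast_le.1 (le_trans (b := 16 * (r : ℝ) * Real.log n ^ 2) ?_ (Nat.le_ceil _))
  push_cast
  nlinarith [mul_le_mul_of_nonneg_left (one_le_four_mul_log_sq hn) (Nat.cast_nonneg (α := ℝ) r)]

lemma mul_one_add_quadratic_le {n r K : ℕ} (hn : 2 ≤ n) (hr : 1 ≤ r) (hK : 1 ≤ K) :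
    (n : ℝ) * (1 + 9 * (K * r ^ 2 : ℕ) * (Real.log n / r) ^ 2) ≤ 16 * K * n * Real.log n ^ 2 := by
  have hr₀ : (r : ℝ) ≠ 0 := by positivity
  have one_le : 1 ≤ (K : ℝ) * (4 * Real.log n ^ 2) :=
    one_le_mul_of_one_le_of_one_le (mod_cast hK) (one_le_four_mul_log_sq hn)
  calc (n : ℝ) * (1 + 9 * (K * r ^ 2 : ℕ) * (Real.log n / r) ^ 2)
      = n * (1 + 9 * K * Real.log n ^ 2) := by push_cast; field_simp
    _ ≤ n * (16 * K * Real.log n ^ 2) := by gcongr; linarith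
    _ = 16 * K * n * Real.log n ^ 2 := by ring

theorem quadratic_expansion_emulator :
    ∃ C c : ℝ, 0 < C ∧ 0 < c ∧
      ∀ n : ℕ, 2 ≤ n → ∀ r K : ℕ, 1 ≤ r → 1 ≤ K →
        ∀ G : SimpleGraph (Fin n), G.Connected →
          (∀ v : Fin n, (gball G v r).ncard ≤ K * r ^ 2) →
          ∃ (H : SimpleGraph (Fin n)) (w : Sym2 (Fin n) → ℕ),
            IsAdditiveEmulator G H w ⌈C * (r : ℝ) * Real.log n ^ c⌉₊ ∧
            ((H.edgeSet.ncard : ℝ) ≤ C * K * n * Real.log n ^ c) := by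
  refine ⟨16, 2, by norm_num, by norm_num, fun n hn r K hr hK G hG hball => ?_⟩
  obtain ⟨H, w, hH, hcard⟩ := quadratic_expansion_emulator_general hG hr hball
  rw [Fintype.card_fin] at hcard
  rw [Real.rpow_two]
  exact ⟨H, w, hH.mono (four_mul_le_ceil_mul_log_sq hn r),
    hcard.trans (mul_one_add_quadratic_le hn hr hK)⟩
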